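/- arXiv:1406.1405 — 2 statements merged into one kernel-verified Lean document; each statement's English description precedes it below -/
import Mathlib

section
/- For every ordinal α, the space ω_{α+1}^ω can be partitioned into ℵ_{α+1} pairwise disjoint subsets, each homeomorphic (as a subspace) to ω_α^ω. -/
universe u

namespace BaireSplit

/-- Concatenation of the first `n` words. -/
def pre {A : Type u} (w : ℕ → List A) : ℕ → List A
  | 0 => []
  | n + 1 => pre w n ++ w n

/-- Infinite concatenation of words. -/
def cat {A : Type u} (a0 : A) (w : ℕ → List A) (k : ℕ) : A := (pre w (k + 1)).getD k a0

lemma le_length_pre {A : Type u} (w : ℕ → List A) (hw : ∀ n, w n ≠ []) (n : ℕ) :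
    n ≤ (pre w n).length := by
  induction n with
  | zero => simp
  | succ n ih =>
    have := List.length_pos_iff.2 (hw n)
    simp only [pre, List.length_append]
    omega

lemma pre_prefix {A : Type u} (w : ℕ → List A) {n m : ℕ} (h : n ≤ m) : pre w n <+: pre w m := by
  induction m, h using Nat.le_induction with
  | base => exact List.prefix_rfl
  | succ m _ ih => exact ih.trans (List.prefix_append _ _)

lemma getElem?_of_prefix {A : Type u} {l l' : List A} (h : l <+: l') {k : ℕ} (hk : k < l.length) :
    l'[k]? = l[k]? := by
  obtain ⟨t, rfl⟩ := h
  exact List.getElem?_append_left hk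

lemma pre_getElem? {A : Type u} (a0 : A) (w : ℕ → List A) (hw : ∀ n, w n ≠ []) {m k : ℕ}
    (hk : k < (pre w m).length) : (pre w m)[k]? = some (cat a0 w k) := by
  have hk' : k < (pre w (k + 1)).length := le_length_pre w hw (k + 1)
  have e : (pre w m)[k]? = (pre w (k + 1))[k]? := by
    rw [← getElem?_of_prefix (pre_prefix w (le_max_left m (k + 1))) hk,
      ← getElem?_of_prefix (pre_prefix w (le_max_right m (k + 1))) hk']
  rw [e, cat, List.getD_eq_getElem?_getD, List.getElem?_eq_getElem hk']
  simp

lemma pre_eq_map {A : Type u} (a0 : A) (w : ℕ → List A) (hw : ∀ n, w n ≠ []) (m : ℕ) :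
    pre w m = (List.range (pre w m).length).map (cat a0 w) := by
  apply List.ext_getElem?
  intro k
  by_cases hk : k < (pre w m).length
  · rw [pre_getElem? a0 w hw hk]
    simp [hk]
  · rw [List.getElem?_eq_none (by omega), List.getElem?_eq_none (by simpa using hk)]

lemma range_map_prefix {A : Type u} (x : ℕ → A) {a b : ℕ} (h : a ≤ b) :
    (List.range a).map x <+: (List.range b).map x := by
  obtain ⟨c, rfl⟩ := Nat.exists_eq_add_of_le h
  rw [List.range_add, List.map_append]
  exact List.prefix_append _ _

/-- Unique parsing. -/
lemma parse_unique {A : Type u} (a0 : A) (W : ℕ → Set (List A))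
    (hW : ∀ n, ∀ l ∈ W n, l ≠ [])
    (hpf : ∀ n, ∀ l ∈ W n, ∀ l' ∈ W n, l <+: l' → l = l')
    (w w' : ℕ → List A) (hw : ∀ n, w n ∈ W n) (hw' : ∀ n, w' n ∈ W n) (n : ℕ)
    (h : ∀ k < (pre w n).length, cat a0 w k = cat a0 w' k) :
    ∀ i ≤ n, pre w i = pre w' i ∧ ∀ j < i, w j = w' j := by
  intro i
  induction i with
  | zero => intro _; exact ⟨rfl, fun j hj => absurd hj (by omega)⟩
  | succ i ih =>
    intro hi
    obtain ⟨h1, h2⟩ := ih (by omega)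
    have e1 := pre_eq_map a0 w (fun n => hW n _ (hw n)) (i + 1)
    have e2 := pre_eq_map a0 w' (fun n => hW n _ (hw' n)) (i + 1)
    have hl : (pre w (i + 1)).length ≤ (pre w n).length := (pre_prefix w hi).length_le
    have e3 : (List.range (pre w (i + 1)).length).map (cat a0 w)
        = (List.range (pre w (i + 1)).length).map (cat a0 w') := by
      apply List.map_congr_left
      intro k hk
      rw [List.mem_range] at hk
      exact h k (by omega)
    rw [e3] at e1
    have key : w i = w' i := by
      rcases le_total (pre w (i + 1)).length (pre w' (i + 1)).length with hle | hle
      · have := range_map_prefix (cat a0 w') hle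
        rw [← e1, ← e2, pre, pre, h1, List.prefix_append_right_inj] at this
        exact hpf i _ (hw i) _ (hw' i) this
      · have := range_map_prefix (cat a0 w') hle
        rw [← e1, ← e2, pre, pre, h1, List.prefix_append_right_inj] at this
        exact (hpf i _ (hw' i) _ (hw i) this).symm
    refine ⟨by rw [pre, pre, h1, key], fun j hj => ?_⟩
    rcases Nat.lt_succ_iff_lt_or_eq.1 hj with hj | rfl
    · exact h2 j hj
    · exact key

open Topology Filter in
lemma isEmbedding_cat {A B : Type u} [TopologicalSpace A] [DiscreteTopology A]
    [TopologicalSpace B] [DiscreteTopology B] (a0 : A) (W : ℕ → Set (List A))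
    (hW : ∀ n, ∀ l ∈ W n, l ≠ [])
    (hpf : ∀ n, ∀ l ∈ W n, ∀ l' ∈ W n, l <+: l' → l = l') (e : ∀ n, B ≃ W n) :
    IsEmbedding (fun b : ℕ → B => cat a0 (fun n => (e n (b n) : List A))) := by
  have key : ∀ (b b' : ℕ → B) (n : ℕ),
      (∀ k < (pre (fun n => (e n (b n) : List A)) n).length,
        cat a0 (fun n => (e n (b n) : List A)) k = cat a0 (fun n => (e n (b' n) : List A)) k) →
      ∀ j < n, b j = b' j := by
    intro b b' n h j hj
    have := (parse_unique a0 W hW hpf _ _ (fun n => (e n (b n)).2) (fun n => (e n (b' n)).2) n h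
      n le_rfl).2 j hj
    exact (e j).injective (Subtype.ext this)
  have hpre : ∀ n, IsLocallyConstant (fun b : ℕ → B => pre (fun n => (e n (b n) : List A)) n) := by
    intro n
    induction n with
    | zero => exact IsLocallyConstant.const _
    | succ n ih =>
      have h2 : IsLocallyConstant (fun b : ℕ → B => (e n (b n) : List A)) := by
        have h3 : IsLocallyConstant (fun b : ℕ → B => b n) :=
          (IsLocallyConstant.iff_continuous _).2 (continuous_apply n)
        exact h3.comp (fun y => (e n y : List A))
      exact ih.comp₂ h2 (fun l l' => l ++ l')
  have hcont : Continuous (fun b : ℕ → B => cat a0 (fun n => (e n (b n) : List A))) := by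
    refine continuous_pi fun k => ?_
    exact ((hpre (k + 1)).comp (fun l => l.getD k a0)).continuous
  refine ⟨isInducing_iff_nhds.2 fun b => le_antisymm ?_ ?_, ?_⟩
  · exact (hcont.tendsto b).le_comap
  · rw [nhds_pi (a := b)]
    refine tendsto_id'.1 (tendsto_pi.2 fun n => ?_)
    rw [nhds_discrete B, tendsto_pure]
    have hev : ∀ᶠ y in 𝓝 (cat a0 (fun n => (e n (b n) : List A))),
        ∀ k ∈ Set.Iio (pre (fun n => (e n (b n) : List A)) (n + 1)).length,
          cat a0 (fun n => (e n (b n) : List A)) k = y k := by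
      rw [eventually_all_finite (Set.finite_Iio _)]
      intro k _
      have := (continuous_apply (A := fun _ : ℕ => A) k).tendsto
        (cat a0 (fun n => (e n (b n) : List A)))
      rw [nhds_discrete A, tendsto_pure] at this
      exact this.mono fun y hy => hy.symm
    refine (hev.comap _).mono fun b' hb' => ?_
    exact (key b b' (n + 1) (fun k hk => hb' k hk) n (by omega)).symm
  · intro b b' h
    funext n
    exact key b b' (n + 1) (fun k _ => congrFun h k) n (by omega)

/-- Words with letters in `D`, whose last letter is the first one in `Q`. -/
def words {A : Type u} (D Q : Set A) : Set (List A) :=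
  {l | ∃ u a, l = u ++ [a] ∧ (∀ b ∈ u, b ∈ D ∧ b ∉ Q) ∧ a ∈ D ∧ a ∈ Q}

lemma words_ne_nil {A : Type u} {D Q : Set A} : ∀ l ∈ words D Q, l ≠ [] := by
  rintro l ⟨u, a, rfl, -⟩; simp

lemma words_pf {A : Type u} {D Q : Set A} :
    ∀ l ∈ words D Q, ∀ l' ∈ words D Q, l <+: l' → l = l' := by
  rintro l ⟨u, a, rfl, hu, ha⟩ l' ⟨u', a', rfl, hu', ha'⟩ h
  rcases List.prefix_concat_iff.1 h with h | h
  · exact h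
  · exact absurd ha.2 (hu' a (h.subset (by simp))).2

open Cardinal in
lemma mk_words {A : Type u} {D Q : Set A} (hD : ℵ₀ ≤ #D) (hne : (D ∩ Q).Nonempty) :
    #(words D Q) = #D := by
  have : Infinite D := Cardinal.infinite_iff.2 hD
  apply le_antisymm
  · rw [← Cardinal.mk_list_eq_mk D]
    have hs : words D Q ⊆ Set.range (List.map (Subtype.val : D → A)) := by
      rintro l ⟨u, a, rfl, hu, ha⟩
      rw [Set.range_list_map]
      intro b hb
      simp only [List.mem_append, List.mem_singleton] at hb
      rcases hb with hb | rfl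
      · simpa using (hu b hb).1
      · simpa using ha.1
    exact (Cardinal.mk_le_mk_of_subset hs).trans Cardinal.mk_range_le
  · have h1 : #(D ∩ Q : Set A) ≤ #(words D Q) := by
      refine Cardinal.mk_le_of_injective
        (f := fun a => ⟨[a.1], [], a.1, rfl, by simp, a.2⟩) fun a b h => ?_
      simpa [Subtype.ext_iff] using h
    have h2 : #(D \ Q : Set A) ≤ #(words D Q) := by
      obtain ⟨c, hc⟩ := hne
      refine Cardinal.mk_le_of_injective
        (f := fun a => ⟨[a.1, c], [a.1], c, rfl, by
          intro b hb
          rw [List.mem_singleton.1 hb]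
          exact a.2, hc⟩) fun a b h => ?_
      simpa [Subtype.ext_iff] using h
    have h3 : #D ≤ #(D ∩ Q : Set A) + #(D \ Q : Set A) := by
      conv_lhs => rw [← Set.inter_union_sdiff D Q]
      exact Cardinal.mk_union_le _ _
    have h4 : #D ≤ #(words D Q) + #(words D Q) := h3.trans (add_le_add h1 h2)
    by_cases hf : #(words D Q) < ℵ₀
    · exact absurd (hD.trans h4) (not_le.2 (Cardinal.add_lt_aleph0 hf hf))
    · rwa [Cardinal.add_eq_self (not_lt.1 hf)] at h4

open Cardinal in
theorem key {A B : Type u} [TopologicalSpace A] [DiscreteTopology A]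
    [TopologicalSpace B] [DiscreteTopology B] (D : Set A) (Q : ℕ → Set A) (X : Set (ℕ → A))
    (hB : ℵ₀ ≤ #B) (hDB : #D = #B) (hne : ∀ n, (D ∩ Q n).Nonempty)
    (h1 : ∀ x ∈ X, (∀ k, x k ∈ D) ∧ (∃ k, x k ∈ Q 0) ∧ ∀ n, ∀ m, ∃ k ≥ m, x k ∈ Q (n + 1))
    (h2 : ∀ x : ℕ → A, (∀ k, x k ∈ D) → (∀ n, ∃ k, x k ∈ Q n) → x ∈ X) :
    Nonempty (X ≃ₜ (ℕ → B)) := by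
  obtain ⟨a0, -⟩ := hne 0
  have e : ∀ n, B ≃ words D (Q n) := fun n =>
    (Cardinal.eq.1 ((mk_words (hDB ▸ hB) (hne n)).trans hDB)).some.symm
  have hemb := isEmbedding_cat a0 (fun n => words D (Q n)) (fun _ => words_ne_nil)
    (fun _ => words_pf) e
  suffices hX : X = Set.range (fun b : ℕ → B => cat a0 (fun n => (e n (b n) : List A))) by
    rw [hX]; exact ⟨hemb.toHomeomorph.symm⟩
  apply Set.Subset.antisymm
  · intro x hx
    obtain ⟨hxD, hx0, hxS⟩ := h1 x hx
    have hex : ∀ n m, ∃ k, (n = 0 → m = 0) →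
        (m ≤ k ∧ x k ∈ Q n ∧ ∀ j, m ≤ j → j < k → x j ∉ Q n) := by
      intro n m
      by_cases hnm : n = 0 → m = 0
      · have hh : ∃ k, m ≤ k ∧ x k ∈ Q n := by
          rcases n with _ | n
          · obtain ⟨k, hk⟩ := hx0
            exact ⟨k, by rw [hnm rfl]; omega, hk⟩
          · exact hxS n m
        classical
        refine ⟨Nat.find hh, fun _ => ⟨(Nat.find_spec hh).1, (Nat.find_spec hh).2, ?_⟩⟩
        intro j hj hjk hq
        exact Nat.find_min hh hjk ⟨hj, hq⟩
      · exact ⟨0, fun h => absurd h hnm⟩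
    choose F hF using hex
    let p : ℕ → ℕ := fun n => Nat.rec 0 (fun n m => F n m + 1) n
    have hp0 : p 0 = 0 := rfl
    have hps : ∀ n, p (n + 1) = F n (p n) + 1 := fun n => rfl
    have hF' : ∀ n, p n ≤ F n (p n) ∧ x (F n (p n)) ∈ Q n ∧
        ∀ j, p n ≤ j → j < F n (p n) → x j ∉ Q n := by
      intro n
      exact hF n (p n) (by rintro rfl; rfl)
    let w : ℕ → List A := fun n =>
      (List.range' (p n) (F n (p n) - p n)).map x ++ [x (F n (p n))]
    have hw : ∀ n, w n ∈ words D (Q n) := by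
      intro n
      refine ⟨_, _, rfl, ?_, hxD _, (hF' n).2.1⟩
      intro b hb
      simp only [List.mem_map, List.mem_range'_1] at hb
      obtain ⟨j, ⟨hj1, hj2⟩, rfl⟩ := hb
      exact ⟨hxD j, (hF' n).2.2 j hj1 (by have := (hF' n).1; omega)⟩
    have hpre : ∀ n, pre w n = (List.range (p n)).map x := by
      intro n
      induction n with
      | zero => rfl
      | succ n ih =>
        have := (hF' n).1
        rw [pre, ih, hps, List.range_succ, List.map_append, ← List.append_assoc,
          ← List.map_append, List.range_eq_range', List.range_eq_range']
        congr 2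
        have h := List.range'_append (s := 0) (m := p n) (n := F n (p n) - p n) (step := 1)
        simp only [one_mul, zero_add] at h
        rw [h]
        congr 1
        omega
    refine ⟨fun n => (e n).symm ⟨w n, hw n⟩, ?_⟩
    simp only [Equiv.apply_symm_apply]
    funext k
    have hwn : ∀ n, w n ≠ [] := fun n => words_ne_nil _ (hw n)
    have hk : k < (pre w (k + 1)).length := le_length_pre w hwn (k + 1)
    have e1 := pre_getElem? a0 w hwn hk
    rw [hpre] at e1 hk
    rw [List.length_map, List.length_range] at hk
    rw [List.getElem?_map, List.getElem?_range hk] at e1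
    simpa using e1.symm
  · rintro _ ⟨b, rfl⟩
    have hwW : ∀ n, (e n (b n) : List A) ∈ words D (Q n) := fun n => (e n (b n)).2
    have hwn : ∀ n, (e n (b n) : List A) ≠ [] := fun n => words_ne_nil _ (hwW n)
    have hpm := fun n => pre_eq_map a0 _ hwn n
    have hpD : ∀ n, ∀ a ∈ pre (fun n => (e n (b n) : List A)) n, a ∈ D := by
      intro n
      induction n with
      | zero => simp [pre]
      | succ n ih =>
        intro a ha
        rw [pre, List.mem_append] at ha
        rcases ha with ha | ha
        · exact ih a ha
        · obtain ⟨u, c, hl, hu, hc⟩ := hwW n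
          simp only [hl, List.mem_append, List.mem_singleton] at ha
          rcases ha with ha | rfl
          · exact (hu a ha).1
          · exact hc.1
    apply h2
    · intro k
      exact hpD (k + 1) _ (List.mem_of_getElem?
        (pre_getElem? a0 _ hwn (le_length_pre _ hwn (k + 1))))
    · intro n
      obtain ⟨u, c, hl, hu, hc⟩ := hwW n
      have hmem : c ∈ pre (fun n => (e n (b n) : List A)) (n + 1) := by
        rw [pre, List.mem_append]; right; simp [hl]
      rw [hpm, List.mem_map] at hmem
      obtain ⟨k, -, hk⟩ := hmem
      refine ⟨k, ?_⟩
      show cat a0 (fun n => (e n (b n) : List A)) k ∈ Q n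
      rw [hk]
      exact hc.2

open Cardinal in
theorem fiber {A B : Type u} [TopologicalSpace A] [DiscreteTopology A]
    [TopologicalSpace B] [DiscreteTopology B] [LinearOrder A]
    (hB : ℵ₀ ≤ #B) (c : A) (U : (ℕ → A) → Set A)
    (hU : ∀ x, U x = {a | c < a ∧ ∀ k, x k < a})
    (x0 : ℕ → A) (β : A) (h0 : IsLeast (U x0) β) (hD : #(Set.Iio β) = #B) :
    Nonempty ({x | IsLeast (U x) β} ≃ₜ (ℕ → B)) := by
  have hcβ : c < β := by have := h0.1; rw [hU] at this; exact this.1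
  have hx0 : ∀ k, x0 k < β := by have := h0.1; rw [hU] at this; exact this.2
  by_cases hsucc : ∃ γ < β, ∀ b < β, b ≤ γ
  · obtain ⟨γ, hγ, hmax⟩ := hsucc
    refine key (Set.Iio β) (fun n => {a | n = 0 → c < γ → γ ≤ a}) _ hB hD
      (fun n => ⟨γ, hγ, fun _ _ => le_rfl⟩) ?_ ?_
    · intro x hx
      have hx' := hx
      simp only [Set.mem_ofPred_eq, hU, IsLeast] at hx
      refine ⟨hx.1.2, ?_, fun n m => ⟨m, le_rfl, fun h => absurd h (by omega)⟩⟩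
      by_contra! hcon
      simp only [Set.mem_ofPred_eq, not_forall, not_le] at hcon
      have := hx.2 (show γ ∈ _ from ⟨(hcon 0).2.1, fun k => (hcon k).2.2⟩)
      exact absurd this (not_le.2 hγ)
    · intro x hxD hxQ
      simp only [Set.mem_ofPred_eq, hU, IsLeast]
      refine ⟨⟨hcβ, hxD⟩, fun b hb => ?_⟩
      by_contra! hlt
      have hbγ := hmax b hlt
      obtain ⟨k, hk⟩ := hxQ 0
      have := hk rfl (hb.1.trans_le hbγ)
      exact absurd (hb.2 k) (not_lt.2 (hbγ.trans this))
  · push Not at hsucc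
    have hcof : ∀ x, IsLeast (U x) β → ∀ b < β, ∃ k, b < x k := by
      intro x hx b hb
      by_contra! hcon
      obtain ⟨d, hd, hd'⟩ := hsucc (max b c) (max_lt hb hcβ)
      rw [hU] at hx
      have := hx.2 (show d ∈ _ from ⟨(le_max_right _ _).trans_lt hd',
        fun k => ((hcon k).trans (le_max_left _ _)).trans_lt hd'⟩)
      exact absurd this (not_le.2 hd)
    have hlate : ∀ x, IsLeast (U x) β → ∀ m, ∀ b < β, ∃ k ≥ m, b < x k := by
      intro x hx m
      have hxD : ∀ k, x k < β := by have := hx.1; rw [hU] at this; exact this.2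
      induction m with
      | zero => intro b hb; obtain ⟨k, hk⟩ := hcof x hx b hb; exact ⟨k, by omega, hk⟩
      | succ m ih =>
        intro b hb
        obtain ⟨k, hk, hk'⟩ := ih (max b (x m)) (max_lt hb (hxD m))
        refine ⟨k, ?_, (le_max_left _ _).trans_lt hk'⟩
        have hne : k ≠ m := by
          rintro rfl
          exact absurd ((le_max_right _ _).trans_lt hk') (lt_irrefl _)
        omega
    refine key (Set.Iio β) (fun n => Set.Ici (x0 n)) _ hB hD
      (fun n => ⟨x0 n, hx0 n, le_rfl⟩) ?_ ?_
    · intro x hx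
      refine ⟨?_, ?_, ?_⟩
      · have := hx.1; rw [hU] at this; exact this.2
      · obtain ⟨k, hk⟩ := hcof x hx (x0 0) (hx0 0)
        exact ⟨k, hk.le⟩
      · intro n m
        obtain ⟨k, hk, hk'⟩ := hlate x hx m (x0 (n + 1)) (hx0 _)
        exact ⟨k, hk, hk'.le⟩
    · intro x hxD hxQ
      simp only [Set.mem_ofPred_eq, hU, IsLeast]
      refine ⟨⟨hcβ, hxD⟩, fun b hb => ?_⟩
      by_contra! hlt
      obtain ⟨n, hn⟩ := hcof x0 h0 b hlt
      obtain ⟨k, hk⟩ := hxQ n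
      exact absurd (hb.2 k) (not_lt.2 (hn.le.trans hk))

open Cardinal in
theorem main {A B : Type u} [TopologicalSpace A] [DiscreteTopology A]
    [TopologicalSpace B] [DiscreteTopology B] (hB : ℵ₀ ≤ #B) (hA : #A = Order.succ #B)
    [LinearOrder A] [WellFoundedLT A] (hI : ∀ a : A, #(Set.Iio a) < #A) :
    ∃ S : A → Set (ℕ → A), Pairwise (Function.onFun Disjoint S) ∧
      (∀ a, (S a).Nonempty) ∧ (⋃ a, S a) = Set.univ ∧
      ∀ a, Nonempty (S a ≃ₜ (ℕ → B)) := by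
  have hBA : #B < #A := by rw [hA]; exact Order.lt_succ _
  have hI' : ∀ a : A, #(Set.Iio a) ≤ #B := fun a => by
    have := hI a; rw [hA] at this; exact Order.lt_succ_iff.1 this
  have hIic : ∀ a : A, #(Set.Iic a) ≤ #B := fun a => by
    rw [← Set.Iio_union_right]
    refine (Cardinal.mk_union_le _ _).trans ?_
    refine (add_le_add (hI' a) (?_ : _ ≤ #B)).trans (Cardinal.add_eq_self hB).le
    rw [Cardinal.mk_singleton]
    exact (Cardinal.one_le_aleph0).trans hB
  have hbdd : ∀ s : Set A, #s ≤ #B → ∃ a, ∀ b ∈ s, b < a := by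
    intro s hs
    by_contra! hcon
    have hu : (⋃ b : s, Set.Iic (b : A)) = Set.univ := by
      ext a
      obtain ⟨b, hb, hab⟩ := hcon a
      simp only [Set.mem_iUnion, Set.mem_univ, iff_true]
      exact ⟨⟨b, hb⟩, hab⟩
    have h1 : #A ≤ #B := by
      rw [← Cardinal.mk_univ, ← hu]
      refine (Cardinal.mk_iUnion_le _).trans ?_
      refine (mul_le_mul' hs (ciSup_le' fun b : s => hIic (b : A))).trans ?_
      exact (Cardinal.mul_eq_self hB).le
    exact absurd hBA (not_lt.2 h1)
  obtain ⟨s, hs⟩ := Cardinal.le_mk_iff_exists_set.1 hBA.le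
  obtain ⟨c, hc⟩ := hbdd s hs.le
  let U : (ℕ → A) → Set A := fun x => {a | c < a ∧ ∀ k, x k < a}
  have hUne : ∀ x, (U x).Nonempty := by
    intro x
    obtain ⟨a, ha⟩ := hbdd (insert c (Set.range x))
      ((Cardinal.le_aleph0_iff_set_countable.2 ((Set.countable_range x).insert c)).trans hB)
    exact ⟨a, ha c (Set.mem_insert _ _), fun k => ha _ (Set.mem_insert_of_mem _ ⟨k, rfl⟩)⟩
  have hleast : ∀ x, ∃ a, IsLeast (U x) a := fun x =>
    ⟨wellFounded_lt.min (U x) (hUne x), wellFounded_lt.min_mem _ _,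
      fun b hb => not_lt.1 (wellFounded_lt.not_lt_min _ hb)⟩
  choose g hg using hleast
  have hIci : #A ≤ #(Set.Ici c) := by
    by_contra! hlt
    have h2 : #(Set.Ici c) ≤ #B := by rw [hA] at hlt; exact Order.lt_succ_iff.1 hlt
    have h3 : #A ≤ #B := by
      rw [← Cardinal.mk_univ, ← Set.Iio_union_Ici (a := c)]
      exact (Cardinal.mk_union_le _ _).trans
        ((add_le_add (hI' c) h2).trans (Cardinal.add_eq_self hB).le)
    exact absurd hBA (not_lt.2 h3)
  have hmono : ∀ a b : A, c ≤ a → a < b → g (fun _ => a) < g (fun _ => b) := by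
    intro a b hca hab
    have h1 : g (fun _ => a) ≤ b := (hg _).2 ⟨hca.trans_lt hab, fun _ => hab⟩
    exact h1.trans_lt ((hg (fun _ => b)).1.2 0)
  have hinj : Function.Injective
      (fun a : Set.Ici c => (⟨g (fun _ => (a : A)), ⟨_, rfl⟩⟩ : Set.range g)) := by
    intro a b h
    replace h : g (fun _ => (a : A)) = g (fun _ => (b : A)) := congrArg Subtype.val h
    rcases lt_trichotomy (a : A) b with hab | hab | hab
    · exact absurd h (hmono a b a.2 hab).ne
    · exact Subtype.ext hab
    · exact absurd h (hmono b a b.2 hab).ne'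
  have hR : #A = #(Set.range g) :=
    le_antisymm (hIci.trans (Cardinal.mk_le_of_injective hinj)) (Cardinal.mk_set_le _)
  obtain ⟨f⟩ := Cardinal.eq.1 hR
  have hS : ∀ x β, g x = β ↔ IsLeast (U x) β := fun x β =>
    ⟨fun h => h ▸ hg x, fun h => (hg x).unique h⟩
  refine ⟨fun a => {x | IsLeast (U x) (f a : A)}, ?_, ?_, ?_, ?_⟩
  · intro a b hab
    rw [Function.onFun, Set.disjoint_left]
    intro x hx hx'
    exact hab (f.injective (Subtype.ext (IsLeast.unique hx hx')))
  · intro a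
    obtain ⟨x, hx⟩ := (f a).2
    exact ⟨x, (hS _ _).1 hx⟩
  · rw [Set.eq_univ_iff_forall]
    intro x
    rw [Set.mem_iUnion]
    refine ⟨f.symm ⟨g x, x, rfl⟩, ?_⟩
    simpa using hg x
  · intro a
    obtain ⟨x, hx⟩ := (f a).2
    have hx' := (hS _ _).1 hx
    refine fiber hB c U (fun _ => rfl) x _ hx' (le_antisymm (hI' _) ?_)
    rw [← hs]
    exact Cardinal.mk_le_mk_of_subset fun b hb => (hc b hb).trans hx'.1.1

end BaireSplit

/-- For every ordinal `o`, the space ω_{o+1}^ω can be partitioned into ℵ_{o+1} pairwise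
disjoint subsets, each homeomorphic to ω_o^ω. -/
theorem stmt_4 (o : Ordinal) (A B : Type u)
    [TopologicalSpace A] [DiscreteTopology A] [TopologicalSpace B] [DiscreteTopology B]
    (hA : Cardinal.mk A = Cardinal.aleph (o + 1)) (hB : Cardinal.mk B = Cardinal.aleph o) :
    ∃ S : A → Set (ℕ → A), Pairwise (Function.onFun Disjoint S) ∧
      (∀ a, (S a).Nonempty) ∧ (⋃ a, S a) = Set.univ ∧
      ∀ a, Nonempty (S a ≃ₜ (ℕ → B)) := by
  obtain ⟨r, hr, h⟩ := Cardinal.ord_eq A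
  classical
  letI : LinearOrder A := linearOrderOfSTO r
  haveI : WellFoundedLT A := ⟨hr.wf⟩
  refine BaireSplit.main ?_ ?_ (fun a => Cardinal.mk_Iio_lt a h)
  · rw [hB]; exact Cardinal.aleph0_le_aleph o
  · rw [hA, hB, Cardinal.aleph_add_one]
end

section
/- If the Baire space ω^ω can be partitioned into κ many Borel sets, then there is a continuous bijection from κ × ω^ω onto ω^ω; conversely, if there is a continuous bijection from ω_n^ω onto ω^ω (for n < ω), then ω^ω can be partitioned into ℵ_n Borel sets. -/
open Set

/-- `s` is the injective projection of a closed subset of the product with Baire space. -/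
def BQ (s : Set (ℕ → ℕ)) : Prop :=
  ∃ G : Set ((ℕ → ℕ) × (ℕ → ℕ)), IsClosed G ∧ (∀ x, x ∈ s ↔ ∃ y, (x, y) ∈ G) ∧
    ∀ x y y', (x, y) ∈ G → (x, y') ∈ G → y = y'

theorem BQ.of_closed {s : Set (ℕ → ℕ)} (hs : IsClosed s) : BQ s := by
  refine ⟨s ×ˢ {0}, hs.prod isClosed_singleton, ?_, ?_⟩
  · intro x; simp
  · rintro x y y' ⟨_, h⟩ ⟨_, h'⟩
    simp only [mem_singleton_iff] at h h'
    rw [h, h']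

theorem BQ.iInter {s : ℕ → Set (ℕ → ℕ)} (hs : ∀ n, BQ (s n)) : BQ (⋂ n, s n) := by
  choose G hc hm hi using hs
  refine ⟨⋂ n, {p | (p.1, fun k => p.2 (Nat.pair n k)) ∈ G n}, ?_, ?_, ?_⟩
  · refine isClosed_iInter fun n => (hc n).preimage (f := fun p : (ℕ → ℕ) × (ℕ → ℕ) =>
      (p.1, fun k => p.2 (Nat.pair n k))) ?_
    fun_prop
  · intro x
    simp only [mem_iInter, hm, mem_ofPred_eq]
    constructor
    · intro h
      choose y hy using h
      refine ⟨fun m => y m.unpair.1 m.unpair.2, fun n => ?_⟩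
      simpa using hy n
    · rintro ⟨y, hy⟩ n
      exact ⟨_, hy n⟩
  · intro x y y' h h'
    simp only [mem_iInter, mem_ofPred_eq] at h h'
    funext m
    have := congrFun (hi m.unpair.1 _ _ _ (h _) (h' _)) m.unpair.2
    simpa using this

theorem BQ.iUnion {s : ℕ → Set (ℕ → ℕ)} (hs : ∀ n, BQ (s n))
    (hd : ∀ m n x, x ∈ s m → x ∈ s n → m = n) : BQ (⋃ n, s n) := by
  choose G hc hm hi using hs
  refine ⟨⋂ k, {p | p.2 0 ≠ k} ∪ {p | (p.1, fun j => p.2 (j + 1)) ∈ G k}, ?_, ?_, ?_⟩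
  · refine isClosed_iInter fun k => IsClosed.union ?_ ?_
    · exact (isClosed_discrete {k}ᶜ).preimage
        (f := fun p : (ℕ → ℕ) × (ℕ → ℕ) => p.2 0) (by fun_prop)
    · exact (hc k).preimage (f := fun p : (ℕ → ℕ) × (ℕ → ℕ) =>
        (p.1, fun j => p.2 (j + 1))) (by fun_prop)
  · intro x
    simp only [mem_iUnion, hm, mem_iInter, mem_union, mem_ofPred_eq]
    constructor
    · rintro ⟨n, y, hy⟩
      refine ⟨fun j => Nat.casesOn j n y, fun k => ?_⟩
      by_cases h : n = k
      · subst h; exact Or.inr hy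
      · exact Or.inl h
    · rintro ⟨y, hy⟩
      exact ⟨y 0, _, (hy (y 0)).resolve_left (by simp)⟩
  · intro x y y' h h'
    simp only [mem_iInter, mem_union, mem_ofPred_eq] at h h'
    have a := (h (y 0)).resolve_left (by simp)
    have b := (h' (y' 0)).resolve_left (by simp)
    have e : y 0 = y' 0 := hd _ _ x ((hm _ _).2 ⟨_, a⟩) ((hm _ _).2 ⟨_, b⟩)
    rw [← e] at b
    have := hi _ _ _ _ a b
    funext j
    cases j with
    | zero => exact e
    | succ j => exact congrFun this j

theorem BQ.inter {s t : Set (ℕ → ℕ)} (hs : BQ s) (ht : BQ t) : BQ (s ∩ t) := by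
  have : s ∩ t = ⋂ n : ℕ, (if n = 0 then s else t) := by
    ext x
    simp only [mem_inter_iff, mem_iInter]
    constructor
    · rintro ⟨a, b⟩ n
      split_ifs <;> assumption
    · intro h
      exact ⟨by simpa using h 0, by simpa using h 1⟩
  rw [this]
  refine BQ.iInter fun n => ?_
  split_ifs <;> assumption

theorem BQ.of_borel {s : Set (ℕ → ℕ)} (hs : @MeasurableSet _ (borel (ℕ → ℕ)) s) :
    BQ s ∧ BQ sᶜ := by
  have hb := (PiNat.isTopologicalBasis_cylinders (fun _ => ℕ)).borel_eq_generateFrom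
  rw [hb] at hs
  refine MeasurableSpace.generateFrom_induction _ (fun s _ => BQ s ∧ BQ sᶜ) ?_ ?_ ?_ ?_ s hs
  · rintro t ⟨x, n, rfl⟩ _
    refine ⟨BQ.of_closed ?_, BQ.of_closed (PiNat.isOpen_cylinder _ x n).isClosed_compl⟩
    have : PiNat.cylinder x n = ⋂ i, ⋂ (_ : i < n), {y : ℕ → ℕ | y i = x i} := by
      ext y; simp [PiNat.mem_cylinder_iff]
    rw [this]
    refine isClosed_iInter fun i => isClosed_iInter fun _ => isClosed_eq (by fun_prop) (by fun_prop)
  · exact ⟨BQ.of_closed isClosed_empty, BQ.of_closed (by simp)⟩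
  · rintro t _ ⟨a, b⟩
    exact ⟨b, by rwa [compl_compl]⟩
  · intro s _ h
    constructor
    · have : (⋃ i, s i) = ⋃ i, (s i ∩ ⋂ j : ℕ, (if j < i then (s j)ᶜ else univ)) := by
        ext x
        simp only [mem_iUnion, mem_inter_iff, mem_iInter]
        constructor
        · intro hx
          classical
          refine ⟨Nat.find hx, Nat.find_spec hx, fun j => ?_⟩
          split_ifs with hj
          · exact Nat.find_min hx hj
          · trivial
        · rintro ⟨i, hi, _⟩
          exact ⟨i, hi⟩
      rw [this]
      refine BQ.iUnion (fun i => (h i).1.inter (BQ.iInter fun j => ?_)) ?_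
      · split_ifs
        · exact (h j).2
        · exact BQ.of_closed isClosed_univ
      · rintro m n x ⟨a, b⟩ ⟨a', b'⟩
        simp only [mem_iInter] at b b'
        rcases lt_trichotomy m n with hh | hh | hh
        · have := b' m
          rw [if_pos hh] at this
          exact absurd a this
        · exact hh
        · have := b n
          rw [if_pos hh] at this
          exact absurd a' this
    · rw [compl_iUnion]
      exact BQ.iInter fun n => (h n).2

/-- Reversed initial segment. -/
def bpre (x : ℕ → ℕ) : ℕ → List ℕ
  | 0 => []
  | n + 1 => x n :: bpre x n

theorem bpre_length (x : ℕ → ℕ) (n : ℕ) : (bpre x n).length = n := by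
  induction n with
  | zero => rfl
  | succ n ih => simp [bpre, ih]

theorem bpre_eq {x y : ℕ → ℕ} {n : ℕ} (h : bpre x n = bpre y n) : ∀ i < n, x i = y i := by
  induction n with
  | zero => intro i hi; omega
  | succ n ih =>
    simp only [bpre, List.cons.injEq] at h
    intro i hi
    rcases Nat.lt_succ_iff_lt_or_eq.1 hi with h1 | h1
    · exact ih h.2 i h1
    · rw [h1]; exact h.1

/-- State of the recursion. -/
def bst (d : List ℕ → ℕ → ℕ × ℕ) (z : ℕ → ℕ) : ℕ → List ℕ
  | 0 => []
  | n + 1 => (d (bst d z n) (z n)).1 :: bst d z n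

theorem closed_param {F : Set (ℕ → ℕ)} (hF : IsClosed F) (hne : F.Nonempty) :
    ∃ g : (ℕ → ℕ) → (ℕ → ℕ) × (ℕ → ℕ), Continuous g ∧ Function.Injective g ∧
      range g = {p | p.1 ∈ F} := by
  let T : Set (List ℕ) := {s | ∃ x ∈ F, ∃ n, s = bpre x n}
  have hd : ∀ s : List ℕ, ∃ d : ℕ → ℕ × ℕ, s ∈ T →
      Function.Injective d ∧ range d = {p | (p.1 :: s) ∈ T} := by
    intro s
    by_cases hs : s ∈ T
    · obtain ⟨x, hx, n, rfl⟩ := hs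
      have hxn : x n :: bpre x n ∈ T := ⟨x, hx, n + 1, rfl⟩
      have : Infinite {p : ℕ × ℕ | (p.1 :: bpre x n) ∈ T} :=
        Infinite.of_injective (fun k : ℕ => (⟨(x n, k), hxn⟩ : {p : ℕ × ℕ | (p.1 :: bpre x n) ∈ T}))
          (by intro a b h; simpa using h)
      obtain ⟨e⟩ := nonempty_equiv_of_countable (α := ℕ) (β := {p : ℕ × ℕ | (p.1 :: bpre x n) ∈ T})
      refine ⟨fun k => (e k).1, fun _ => ⟨Subtype.val_injective.comp e.injective, ?_⟩⟩
      have := range_comp (Subtype.val : {p : ℕ × ℕ | (p.1 :: bpre x n) ∈ T} → _) e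
      rw [e.surjective.range_eq, image_univ, Subtype.range_coe] at this
      exact this
    · exact ⟨fun _ => 0, fun h => absurd h hs⟩
  choose d hd using hd
  let X : (ℕ → ℕ) → ℕ → ℕ := fun z n => (d (bst d z n) (z n)).1
  let Y : (ℕ → ℕ) → ℕ → ℕ := fun z n => (d (bst d z n) (z n)).2
  have hst : ∀ z n, bst d z n = bpre (X z) n := by
    intro z n
    induction n with
    | zero => rfl
    | succ n ih =>
      rw [bst, bpre, ← ih]
  have hT : ∀ z n, bst d z n ∈ T := by
    intro z n
    induction n with
    | zero => obtain ⟨x, hx⟩ := hne; exact ⟨x, hx, 0, rfl⟩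
    | succ n ih =>
      have : d (bst d z n) (z n) ∈ {p : ℕ × ℕ | (p.1 :: bst d z n) ∈ T} := by
        rw [← (hd _ ih).2]; exact mem_range_self _
      exact this
  have hlc : ∀ n, IsLocallyConstant fun z : ℕ → ℕ => z n := fun n =>
    (IsLocallyConstant.iff_continuous _).2 (continuous_apply n)
  have hl : ∀ n, IsLocallyConstant fun z => bst d z n := by
    intro n
    induction n with
    | zero => exact IsLocallyConstant.const _
    | succ n ih => exact ih.comp₂ (hlc n) fun s k => (d s k).1 :: s
  refine ⟨fun z => (X z, Y z), ?_, ?_, ?_⟩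
  · refine Continuous.prodMk (continuous_pi fun n => ?_) (continuous_pi fun n => ?_)
    · exact ((hl n).comp₂ (hlc n) fun s k => (d s k).1).continuous
    · exact ((hl n).comp₂ (hlc n) fun s k => (d s k).2).continuous
  · intro z z' h
    simp only [Prod.mk.injEq] at h
    funext n
    have e : bst d z n = bst d z' n := by rw [hst, hst, h.1]
    have : d (bst d z n) (z n) = d (bst d z' n) (z' n) :=
      Prod.ext (congrFun h.1 n) (congrFun h.2 n)
    rw [← e] at this
    exact (hd _ (hT z n)).1 this
  · ext ⟨x, y⟩
    simp only [mem_range, Prod.mk.injEq, mem_ofPred_eq]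
    constructor
    · rintro ⟨z, rfl, _⟩
      rw [← hF.closure_eq, (PiNat.isTopologicalBasis_cylinders (fun _ => ℕ)).mem_closure_iff]
      rintro o ⟨w, n, rfl⟩ hw
      obtain ⟨x', hx', m, hm⟩ := hT z n
      have : n = m := by
        have := congrArg List.length hm
        rwa [hst, bpre_length, bpre_length] at this
      subst this
      rw [hst] at hm
      refine ⟨x', ?_, hx'⟩
      rw [PiNat.mem_cylinder_iff] at hw ⊢
      intro i hi
      rw [← hw i hi, bpre_eq hm i hi]
    · intro hx
      have : ∀ n, ∃ k, d (bpre x n) k = (x n, y n) := by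
        intro n
        have h1 : bpre x n ∈ T := ⟨x, hx, n, rfl⟩
        have h2 : (x n, y n) ∈ {p : ℕ × ℕ | (p.1 :: bpre x n) ∈ T} := ⟨x, hx, n + 1, rfl⟩
        rw [← (hd _ h1).2] at h2
        exact h2
      choose z hz using this
      have hs : ∀ n, bst d z n = bpre x n := by
        intro n
        induction n with
        | zero => rfl
        | succ n ih => rw [bst, bpre, ih, hz]
      refine ⟨z, ?_, ?_⟩
      · funext n
        simp only [X, hs, hz]
      · funext n
        simp only [Y, hs, hz]

theorem prod_homeo : Nonempty ((ℕ → ℕ) × (ℕ → ℕ) ≃ₜ (ℕ → ℕ)) :=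
  ⟨Homeomorph.sumArrowHomeomorphProdArrow.symm.trans
    (Homeomorph.piCongrLeft (Y := fun _ => ℕ) Equiv.natSumNatEquivNat)⟩

theorem borel_param {s : Set (ℕ → ℕ)} (hs : @MeasurableSet _ (borel (ℕ → ℕ)) s)
    (hne : s.Nonempty) :
    ∃ g : (ℕ → ℕ) → (ℕ → ℕ) × (ℕ → ℕ), Continuous g ∧ Function.Injective g ∧
      range g = {p | p.1 ∈ s} := by
  obtain ⟨G, hc, hm, hi⟩ := (BQ.of_borel hs).1
  obtain ⟨Φ⟩ := prod_homeo
  obtain ⟨x, hx⟩ := hne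
  obtain ⟨y, hy⟩ := (hm x).1 hx
  obtain ⟨g, gc, gi, gr⟩ := closed_param (F := Φ.symm ⁻¹' G) (hc.preimage Φ.symm.continuous)
    ⟨Φ (x, y), by simpa using hy⟩
  have hg : ∀ z, Φ.symm (g z).1 ∈ G := by
    intro z
    have : g z ∈ {p : (ℕ → ℕ) × (ℕ → ℕ) | p.1 ∈ Φ.symm ⁻¹' G} := by
      rw [← gr]; exact mem_range_self z
    exact this
  refine ⟨fun z => ((Φ.symm (g z).1).1, (g z).2), ?_, ?_, ?_⟩
  · have := Φ.symm.continuous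
    fun_prop
  · intro z z' h
    simp only [Prod.mk.injEq] at h
    have h1 := hg z
    have h2 := hg z'
    apply gi
    refine Prod.ext (Φ.symm.injective (Prod.ext h.1 ?_)) h.2
    refine hi (Φ.symm (g z).1).1 _ _ h1 ?_
    rw [h.1]; exact h2
  · ext ⟨a, b⟩
    simp only [mem_range, Prod.mk.injEq, mem_ofPred_eq]
    constructor
    · rintro ⟨z, rfl, _⟩
      exact (hm _).2 ⟨_, hg z⟩
    · intro ha
      obtain ⟨w, hw⟩ := (hm a).1 ha
      have : (Φ (a, w), b) ∈ range g := by
        rw [gr]; simpa using hw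
      obtain ⟨z, hz⟩ := this
      refine ⟨z, ?_, ?_⟩ <;> simp [hz]

theorem part_one (I : Type) [TopologicalSpace I] [DiscreteTopology I] (B : I → Set (ℕ → ℕ))
    (h1 : Pairwise (Function.onFun Disjoint B)) (h2 : ∀ i, (B i).Nonempty)
    (h3 : (⋃ i, B i) = Set.univ) (h4 : ∀ i, @MeasurableSet _ (borel (ℕ → ℕ)) (B i)) :
    ∃ f : I × (ℕ → ℕ) → (ℕ → ℕ), Continuous f ∧ Function.Bijective f := by
  choose g gc gi gr using fun i => borel_param (h4 i) (h2 i)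
  obtain ⟨Φ⟩ := prod_homeo
  have hg : ∀ i z, (g i z).1 ∈ B i := by
    intro i z
    have : g i z ∈ {p : (ℕ → ℕ) × (ℕ → ℕ) | p.1 ∈ B i} := by
      rw [← gr]; exact mem_range_self z
    exact this
  refine ⟨fun p => Φ (g p.1 p.2), ?_, ?_, ?_⟩
  · refine Φ.continuous.comp ?_
    exact continuous_prod_of_discrete_left.2 gc
  · rintro ⟨i, z⟩ ⟨j, w⟩ h
    have h' : g i z = g j w := Φ.injective h
    have : i = j := by
      by_contra hne
      refine Set.disjoint_left.1 (h1 hne) (hg i z) ?_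
      rw [h']; exact hg j w
    subst this
    rw [gi i h']
  · intro y
    have : (Φ.symm y).1 ∈ ⋃ i, B i := by rw [h3]; trivial
    obtain ⟨i, hi⟩ := mem_iUnion.1 this
    have : Φ.symm y ∈ range (g i) := by rw [gr]; exact hi
    obtain ⟨z, hz⟩ := this
    exact ⟨(i, z), by simp [hz]⟩

/-- Borel and living on a countable alphabet. -/
def AGood {A : Type} [TopologicalSpace A] (P : Set (ℕ → A)) : Prop :=
  @MeasurableSet _ (borel (ℕ → A)) P ∧ ∃ C : Set A, C.Countable ∧ ∀ x ∈ P, ∀ k, x k ∈ C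

theorem coord_meas {A : Type} [TopologicalSpace A] [DiscreteTopology A] (S : Set A) (k : ℕ) :
    @MeasurableSet _ (borel (ℕ → A)) {x | x k ∈ S} := by
  let : MeasurableSpace (ℕ → A) := borel _
  have : BorelSpace (ℕ → A) := ⟨rfl⟩
  exact ((isOpen_discrete S).preimage (continuous_apply k)).measurableSet

theorem AGood.image {A : Type} [TopologicalSpace A] [DiscreteTopology A] {P : Set (ℕ → A)}
    (hP : AGood P) {f : (ℕ → A) → (ℕ → ℕ)} (hf : Continuous f) (hi : Function.Injective f) :
    @MeasurableSet _ (borel (ℕ → ℕ)) (f '' P) := by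
  obtain ⟨hm, C, hC, hPC⟩ := hP
  have : Countable C := hC.to_subtype
  let : MeasurableSpace (ℕ → C) := borel _
  have : BorelSpace (ℕ → C) := ⟨rfl⟩
  let : MeasurableSpace (ℕ → A) := borel _
  have : BorelSpace (ℕ → A) := ⟨rfl⟩
  have : DiscreteTopology C := inferInstance
  have : PolishSpace C := inferInstance
  let ι : (ℕ → C) → (ℕ → A) := fun x k => (x k : A)
  have hι : Continuous ι := by fun_prop
  have hιi : Function.Injective ι := by
    intro x y h
    funext k
    exact Subtype.ext (congrFun h k)
  have hm' : MeasurableSet (ι ⁻¹' P) := hι.measurable hm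
  have e : f '' P = (f ∘ ι) '' (ι ⁻¹' P) := by
    rw [image_comp, image_preimage_eq_of_subset]
    intro x hx
    exact ⟨fun k => ⟨x k, hPC x hx k⟩, rfl⟩
  rw [e, ← BorelSpace.measurable_eq (α := ℕ → ℕ)]
  exact hm'.image_of_continuousOn_injOn (hf.comp hι).continuousOn (hi.comp hιi).injOn

theorem label {A : Type} [TopologicalSpace A] [DiscreteTopology A] [Infinite A] (n : ℕ) :
    Cardinal.aleph n ≤ Cardinal.mk A → ∀ S : Set A, Cardinal.mk S ≤ Cardinal.aleph n →
      ∃ c : (ℕ → A) → A, ∀ a, AGood {x | (∀ k, x k ∈ S) ∧ c x = a} := by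
  let : MeasurableSpace (ℕ → A) := borel _
  induction n with
  | zero =>
    intro _ S hS
    obtain ⟨a0⟩ : Nonempty A := inferInstance
    have hSc : S.Countable := by
      rw [← Cardinal.le_aleph0_iff_set_countable]
      simpa using hS
    refine ⟨fun _ => a0, fun a => ⟨?_, S, hSc, fun x hx => hx.1⟩⟩
    have : {x : ℕ → A | (∀ k, x k ∈ S) ∧ a0 = a} = (⋂ k, {x | x k ∈ S}) ∩ {x | a0 = a} := by
      ext x; simp
    rw [this]
    exact (MeasurableSet.iInter fun k => coord_meas S k).inter (MeasurableSet.const _)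
  | succ n ih =>
    intro hA S hS
    have hle : Cardinal.aleph n ≤ Cardinal.mk A :=
      (Cardinal.aleph_le_aleph.2 (by exact_mod_cast Nat.le_succ n)).trans hA
    replace ih := ih hle
    set κ : Cardinal.{0} := Cardinal.aleph ((n + 1 : ℕ)) with hκ
    have hκs : κ = Order.succ (Cardinal.aleph n) := by
      rw [hκ, ← Cardinal.aleph_succ]; simp
    have hreg : κ.IsRegular := by
      have := Cardinal.isRegular_aleph_add_one (n : Ordinal.{0})
      rw [hκ]; exact_mod_cast this
    have hmk : Cardinal.mk (Iio κ.ord) = Cardinal.lift.{1} κ := by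
      rw [Cardinal.mk_Iio_ordinal, Cardinal.card_ord]
    -- ranks
    obtain ⟨r0⟩ : Nonempty (S ↪ Iio κ.ord) := by
      rw [← Cardinal.lift_mk_le', hmk]
      simpa using hS
    obtain ⟨e0⟩ : Nonempty (Iio κ.ord ↪ A) := by
      rw [← Cardinal.lift_mk_le', hmk]
      simpa using hA
    obtain ⟨p⟩ : Nonempty (A × A ≃ A) := by
      rw [← Cardinal.eq]
      simp [Cardinal.mul_eq_self (Cardinal.aleph0_le_mk A)]
    obtain ⟨a0⟩ : Nonempty A := inferInstance
    classical
    let r : A → Ordinal.{0} := fun a => if h : a ∈ S then (r0 ⟨a, h⟩).1 else 0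
    have hr : ∀ a ∈ S, r a < κ.ord := by
      intro a h
      simp only [r, dif_pos h]
      exact (r0 ⟨a, h⟩).2
    have hri : ∀ a ∈ S, ∀ b ∈ S, r a = r b → a = b := by
      intro a ha b hb h
      simp only [r, dif_pos ha, dif_pos hb] at h
      have := r0.injective (Subtype.ext h)
      exact congrArg Subtype.val this
    let σ : (ℕ → A) → Ordinal.{0} := fun x => ⨆ k, (r (x k) + 1)
    have hσ : ∀ x α, σ x ≤ α ↔ ∀ k, r (x k) < α := by
      intro x α
      simp only [σ]
      rw [Ordinal.iSup_le_iff]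
      simp [Order.add_one_le_iff]
    have hσlt : ∀ x, (∀ k, x k ∈ S) → σ x < κ.ord := by
      intro x hx
      apply Ordinal.iSup_lt_of_lt_cof
      · rw [hreg.cof_ord, hκs]
        simp [Order.lt_succ_iff]
      · intro k
        exact (Cardinal.isSuccLimit_ord hreg.aleph0_le).add_one_lt (hr _ (hx k))
    -- the levels are Borel
    have hD : ∀ α, MeasurableSet {x : ℕ → A | σ x = α} := by
      intro α
      by_cases hne : ∃ x0, σ x0 = α
      · obtain ⟨x0, hx0⟩ := hne
        have : {x : ℕ → A | σ x = α} = (⋂ k, {x | x k ∈ {a | r a < α}}) ∩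
            ⋂ j, ⋃ k, {x | x k ∈ {a | r (x0 j) ≤ r a}} := by
          ext x
          simp only [mem_ofPred_eq, mem_inter_iff, mem_iInter, mem_iUnion]
          rw [← hσ]
          constructor
          · intro h
            refine ⟨h.le, fun j => ?_⟩
            by_contra hcon
            push Not at hcon
            have h1 := (hσ x _).2 hcon
            rw [h, ← hx0] at h1
            exact lt_irrefl _ ((hσ x0 _).1 h1 j)
          · rintro ⟨h, h'⟩
            refine le_antisymm h ?_
            rw [← hx0, hσ]
            intro j
            obtain ⟨k, hk⟩ := h' j
            exact hk.trans_lt ((hσ x _).1 le_rfl k)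
        rw [this]
        exact (MeasurableSet.iInter fun k => coord_meas _ k).inter
          (MeasurableSet.iInter fun j => MeasurableSet.iUnion fun k => coord_meas _ k)
      · have : {x : ℕ → A | σ x = α} = ∅ := by
          ext x
          simp only [mem_ofPred_eq, mem_empty_iff_false, iff_false]
          exact fun h => hne ⟨x, h⟩
        rw [this]
        exact MeasurableSet.empty
    have hsub : ∀ α : Iio κ.ord, ∃ c : (ℕ → A) → A, ∀ a,
        AGood {x | (∀ k, x k ∈ {a | a ∈ S ∧ r a < α.1}) ∧ c x = a} := by
      rintro ⟨α, hα⟩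
      apply ih
      have hc : α.card ≤ Cardinal.aleph n := by
        have := Cardinal.lt_ord.1 hα
        rwa [hκs, Order.lt_succ_iff] at this
      refine le_trans ?_ hc
      have : Nonempty ({a | a ∈ S ∧ r a < α} ↪ Iio α) :=
        ⟨⟨fun a => ⟨r a.1, a.2.2⟩, fun a b h => Subtype.ext
          (hri _ a.2.1 _ b.2.1 (congrArg Subtype.val h))⟩⟩
      rw [← Cardinal.lift_mk_le', Cardinal.mk_Iio_ordinal, Cardinal.lift_uzero] at this
      exact Cardinal.lift_le.1 this
    choose c hc using hsub
    let E : Ordinal.{0} → (ℕ → A) → A := fun α x =>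
      if h : α < κ.ord then p (e0 ⟨α, h⟩, c ⟨α, h⟩ x) else a0
    refine ⟨fun x => E (σ x) x, fun a => ?_⟩
    by_cases ha : ∃ α : Iio κ.ord, e0 α = (p.symm a).1
    · obtain ⟨α, hα⟩ := ha
      have : {x : ℕ → A | (∀ k, x k ∈ S) ∧ E (σ x) x = a} = {x | σ x = α.1} ∩
          {x | (∀ k, x k ∈ {a | a ∈ S ∧ r a < α.1}) ∧ c α x = (p.symm a).2} := by
        ext x
        simp only [mem_ofPred_eq, mem_inter_iff]
        constructor
        · rintro ⟨hx, h⟩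
          have hl := hσlt x hx
          simp only [E, dif_pos hl] at h
          rw [← h] at hα ⊢
          simp only [Equiv.symm_apply_apply] at hα ⊢
          have := e0.injective hα
          subst this
          exact ⟨rfl, fun k => ⟨hx k, (hσ x _).1 le_rfl k⟩, rfl⟩
        · rintro ⟨h, hx, h'⟩
          refine ⟨fun k => (hx k).1, ?_⟩
          have hl := hσlt x fun k => (hx k).1
          simp only [E, dif_pos hl]
          have : (⟨σ x, hl⟩ : Iio κ.ord) = α := Subtype.ext h
          rw [this, hα, h']
          simp
      rw [this]
      obtain ⟨h1, C, hC, h2⟩ := hc α (p.symm a).2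
      exact ⟨(hD _).inter h1, C, hC, fun x hx => h2 x hx.2⟩
    · have : {x : ℕ → A | (∀ k, x k ∈ S) ∧ E (σ x) x = a} = ∅ := by
        ext x
        simp only [mem_ofPred_eq, mem_empty_iff_false, iff_false]
        rintro ⟨hx, h⟩
        have hl := hσlt x hx
        simp only [E, dif_pos hl] at h
        exact ha ⟨⟨σ x, hl⟩, by rw [← h]; simp⟩
      rw [this]
      exact ⟨MeasurableSet.empty, ∅, countable_empty, fun x hx => absurd hx (by simp)⟩

theorem part_two (n : ℕ) (A : Type) [TopologicalSpace A] [DiscreteTopology A]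
    (hA : Cardinal.mk A = Cardinal.aleph n)
    (hf : ∃ f : (ℕ → A) → (ℕ → ℕ), Continuous f ∧ Function.Bijective f) :
      ∃ B : A → Set (ℕ → ℕ), Pairwise (Function.onFun Disjoint B) ∧
        (∀ a, (B a).Nonempty) ∧ (⋃ a, B a) = Set.univ ∧
        ∀ a, @MeasurableSet _ (borel (ℕ → ℕ)) (B a) := by
  obtain ⟨f, fc, fi, fs⟩ := hf
  have : Infinite A := by
    rw [Cardinal.infinite_iff, hA]
    exact Cardinal.aleph0_le_aleph _
  obtain ⟨c, hc⟩ := label (A := A) n hA.ge univ (by simp [hA])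
  have hmul : Cardinal.mk (A × A) = Cardinal.mk A := by
    simp [Cardinal.mul_eq_self (Cardinal.aleph0_le_mk A)]
  let c' : (ℕ → A) → A × A := fun x => (x 0, c x)
  have hJ : Cardinal.mk A = Cardinal.mk (range c') := by
    apply le_antisymm
    · refine Cardinal.mk_le_of_injective
        (f := fun a : A => (⟨c' fun _ => a, ⟨fun _ => a, rfl⟩⟩ : range c')) ?_
      intro a b h
      have := congrArg (fun q : range c' => q.1.1) h
      exact this
    · exact (Cardinal.mk_set_le _).trans hmul.le
  obtain ⟨e⟩ := Cardinal.eq.1 hJ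
  refine ⟨fun a => f '' {x | c' x = (e a).1}, ?_, ?_, ?_, ?_⟩
  · intro a b hab
    refine Set.disjoint_left.2 ?_
    rintro _ ⟨x, hx, rfl⟩ ⟨y, hy, hxy⟩
    have := fi hxy
    subst this
    exact hab (e.injective (Subtype.ext ((hx : c' y = _).symm.trans hy)))
  · intro a
    obtain ⟨x, hx⟩ := (e a).2
    exact ⟨f x, x, hx, rfl⟩
  · refine eq_univ_of_forall fun y => ?_
    obtain ⟨x, rfl⟩ := fs y
    refine mem_iUnion.2 ⟨e.symm ⟨c' x, mem_range_self x⟩, x, ?_, rfl⟩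
    simp
  · intro a
    refine AGood.image ?_ fc fi
    obtain ⟨h1, C, hC, h2⟩ := hc (e a).1.2
    let : MeasurableSpace (ℕ → A) := borel _
    have : {x | c' x = (e a).1} = {x | x 0 ∈ ({(e a).1.1} : Set A)} ∩
        {x | (∀ k, x k ∈ univ) ∧ c x = (e a).1.2} := by
      ext x
      simp [c', Prod.ext_iff]
    rw [this]
    exact ⟨(coord_meas _ 0).inter h1, C, hC, fun x hx => h2 x hx.2⟩


/-- If ω^ω can be partitioned into κ Borel sets then there is a continuous bijection from
κ × ω^ω onto ω^ω; conversely, if there is a continuous bijection from ω_n^ω onto ω^ω,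
then ω^ω can be partitioned into ℵ_n Borel sets. -/
theorem stmt_13 :
    (∀ (I : Type) [TopologicalSpace I] [DiscreteTopology I] (B : I → Set (ℕ → ℕ)),
      (Pairwise (Function.onFun Disjoint B) ∧ (∀ i, (B i).Nonempty) ∧
        (⋃ i, B i) = Set.univ ∧ ∀ i, @MeasurableSet _ (borel (ℕ → ℕ)) (B i)) →
      ∃ f : I × (ℕ → ℕ) → (ℕ → ℕ), Continuous f ∧ Function.Bijective f) ∧
    (∀ (n : ℕ) (A : Type) [TopologicalSpace A] [DiscreteTopology A],
      Cardinal.mk A = Cardinal.aleph n →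
      (∃ f : (ℕ → A) → (ℕ → ℕ), Continuous f ∧ Function.Bijective f) →
      ∃ B : A → Set (ℕ → ℕ), Pairwise (Function.onFun Disjoint B) ∧
        (∀ a, (B a).Nonempty) ∧ (⋃ a, B a) = Set.univ ∧
        ∀ a, @MeasurableSet _ (borel (ℕ → ℕ)) (B a)) := by
  exact ⟨fun I _ _ B h => part_one I B h.1 h.2.1 h.2.2.1 h.2.2.2,
    fun n A _ _ hA hf => part_two n A hA hf⟩
end
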